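/- Let 0 < κ < 1 and C > 0. There exists a positive integer N depending only on κ and C such that for every Borel probability measure μ supported on [−C, C] satisfying μ(B(x, r)) ≤ C r^κ for all x ∈ supp(μ) and r > 0, writing K = supp(μ), the set N K^{(N)} − N K^{(N)} has Lebesgue measure bounded below by a positive constant depending only on κ and C. -/

import Mathlib

open MeasureTheory
open scoped Pointwise ENNReal

/-- The `N`-fold sumset `{x₁ + ⋯ + x_N : x_i ∈ S}`. -/
def sumN (N : ℕ) (S : Set ℝ) : Set ℝ :=
  {x | ∃ f : Fin N → ℝ, (∀ i, f i ∈ S) ∧ x = ∑ i, f i}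

/-- The `N`-fold product set `{x₁ ⋯ x_N : x_i ∈ S}`. -/
def prodN (N : ℕ) (S : Set ℝ) : Set ℝ :=
  {x | ∃ f : Fin N → ℝ, (∀ i, f i ∈ S) ∧ x = ∏ i, f i}

/-- The support of a measure: points all of whose open neighbourhoods have positive measure. -/
def msupport {X : Type*} [TopologicalSpace X] [MeasurableSpace X]
    (μ : Measure X) : Set X :=
  {x | ∀ U : Set X, IsOpen U → x ∈ U → 0 < μ U}

lemma sum_mem_sumN {ι : Type*} [Fintype ι] {n : ℕ} (h : Fintype.card ι = n) {S : Set ℝ}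
    (f : ι → ℝ) (hf : ∀ i, f i ∈ S) : ∑ i, f i ∈ sumN n S := by
  refine ⟨fun i => f ((Fintype.equivFinOfCardEq h).symm i), fun i => hf _, ?_⟩
  exact ((Fintype.equivFinOfCardEq h).symm.sum_comp f).symm

lemma prod_mem_prodN {ι : Type*} [Fintype ι] {n : ℕ} (h : Fintype.card ι = n) {S : Set ℝ}
    (f : ι → ℝ) (hf : ∀ i, f i ∈ S) : ∏ i, f i ∈ prodN n S := by
  refine ⟨fun i => f ((Fintype.equivFinOfCardEq h).symm i), fun i => hf _, ?_⟩
  exact ((Fintype.equivFinOfCardEq h).symm.prod_comp f).symm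

lemma sumN_add {m n : ℕ} {S : Set ℝ} {x y : ℝ} (hx : x ∈ sumN m S) (hy : y ∈ sumN n S) :
    x + y ∈ sumN (m + n) S := by
  obtain ⟨f, hf, rfl⟩ := hx
  obtain ⟨g, hg, rfl⟩ := hy
  have := sum_mem_sumN (ι := Fin m ⊕ Fin n) (n := m + n) (by simp) (S := S) (Sum.elim f g)
    (by rintro (i | i) <;> simp [hf, hg])
  simpa using this

lemma prodN_mul {m n : ℕ} {S : Set ℝ} {x y : ℝ} (hx : x ∈ prodN m S) (hy : y ∈ prodN n S) :
    x * y ∈ prodN (m + n) S := by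
  obtain ⟨f, hf, rfl⟩ := hx
  obtain ⟨g, hg, rfl⟩ := hy
  have := prod_mem_prodN (ι := Fin m ⊕ Fin n) (n := m + n) (by simp) (S := S) (Sum.elim f g)
    (by rintro (i | i) <;> simp [hf, hg])
  simpa using this

lemma sumN_mul {m n d d' : ℕ} {K : Set ℝ} {x y : ℝ} (hx : x ∈ sumN m (prodN d K))
    (hy : y ∈ sumN n (prodN d' K)) : x * y ∈ sumN (m * n) (prodN (d + d') K) := by
  obtain ⟨f, hf, rfl⟩ := hx
  obtain ⟨g, hg, rfl⟩ := hy
  have := sum_mem_sumN (ι := Fin m × Fin n) (n := m * n) (by simp) (S := prodN (d + d') K)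
    (fun p => f p.1 * g p.2) (fun p => prodN_mul (hf _) (hg _))
  rwa [Fintype.sum_prod_type, ← Finset.sum_mul_sum] at this

/-- The difference set `m K^(d) - m K^(d)`. -/
def dset (K : Set ℝ) (m d : ℕ) : Set ℝ := sumN m (prodN d K) - sumN m (prodN d K)

lemma dset_add {K : Set ℝ} {m n d : ℕ} {x y : ℝ} (hx : x ∈ dset K m d) (hy : y ∈ dset K n d) :
    x + y ∈ dset K (m + n) d := by
  obtain ⟨a, ha, b, hb, rfl⟩ := hx
  obtain ⟨a', ha', b', hb', rfl⟩ := hy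
  exact ⟨a + a', sumN_add ha ha', b + b', sumN_add hb hb', by simp only; ring⟩

lemma dset_neg {K : Set ℝ} {m d : ℕ} {x : ℝ} (hx : x ∈ dset K m d) : -x ∈ dset K m d := by
  obtain ⟨a, ha, b, hb, rfl⟩ := hx
  exact ⟨b, hb, a, ha, by simp only; ring⟩

lemma dset_mul {K : Set ℝ} {m n d d' : ℕ} {x y : ℝ} (hx : x ∈ dset K m d)
    (hy : y ∈ dset K n d') : x * y ∈ dset K (2 * (m * n)) (d + d') := by
  obtain ⟨a, ha, b, hb, rfl⟩ := hx
  obtain ⟨a', ha', b', hb', rfl⟩ := hy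
  refine ⟨a * a' + b * b', ?_, a * b' + b * a', ?_, by simp only; ring⟩
  · rw [two_mul]; exact sumN_add (sumN_mul ha ha') (sumN_mul hb hb')
  · rw [two_mul]; exact sumN_add (sumN_mul ha hb') (sumN_mul hb ha')

lemma dset_zero {K : Set ℝ} {u : ℝ} (hu : u ∈ K) (m d : ℕ) : (0 : ℝ) ∈ dset K m d := by
  have h : ∑ _i : Fin m, ∏ _j : Fin d, u ∈ sumN m (prodN d K) :=
    ⟨_, fun i => ⟨fun _ => u, fun _ => hu, rfl⟩, rfl⟩
  exact ⟨_, h, _, h, by simp⟩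

lemma dset_mono {K : Set ℝ} {u : ℝ} (hu : u ∈ K) {m n d : ℕ} (h : m ≤ n) {x : ℝ}
    (hx : x ∈ dset K m d) : x ∈ dset K n d := by
  obtain ⟨r, rfl⟩ := Nat.exists_eq_add_of_le h
  simpa using dset_add hx (dset_zero hu r d)

lemma dset_nsmul {K : Set ℝ} {u : ℝ} (hu : u ∈ K) {m d : ℕ} {x : ℝ}
    (hx : x ∈ dset K m d) (n : ℕ) : (n : ℝ) * x ∈ dset K (n * m) d := by
  induction n with
  | zero => simpa using dset_zero hu 0 d
  | succ n ih =>
    have := dset_add ih hx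
    rw [Nat.succ_mul]
    push_cast
    rwa [add_mul, one_mul]

lemma dset_zsmul {K : Set ℝ} {u : ℝ} (hu : u ∈ K) {m d n : ℕ} {x : ℝ}
    (hx : x ∈ dset K m d) (q : ℤ) (hq : |q| ≤ n) : (q : ℝ) * x ∈ dset K (n * m) d := by
  obtain ⟨p, rfl | rfl⟩ := Int.eq_nat_or_neg q
  · have h1 : p ≤ n := by simpa using hq
    simpa using dset_mono hu (Nat.mul_le_mul_right m h1) (dset_nsmul hu hx p)
  · have h1 : p ≤ n := by simpa using hq
    simpa using dset_neg (dset_mono hu (Nat.mul_le_mul_right m h1) (dset_nsmul hu hx p))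

lemma dset_bound {K : Set ℝ} {C : ℝ} (hK : K ⊆ Set.Icc (-C) C) {m d : ℕ} {x : ℝ}
    (hx : x ∈ dset K m d) : |x| ≤ 2 * (m * C ^ d) := by
  have h1 : ∀ y ∈ prodN d K, |y| ≤ C ^ d := by
    rintro y ⟨f, hf, rfl⟩
    rw [Finset.abs_prod]
    calc ∏ i, |f i| ≤ ∏ _i : Fin d, C :=
          Finset.prod_le_prod (fun _ _ => abs_nonneg _) (fun i _ => abs_le.2 (hK (hf i)))
      _ = _ := by simp
  have h2 : ∀ y ∈ sumN m (prodN d K), |y| ≤ m * C ^ d := by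
    rintro y ⟨f, hf, rfl⟩
    calc |∑ i, f i| ≤ ∑ i, |f i| := Finset.abs_sum_le_sum_abs _ _
      _ ≤ ∑ _i : Fin m, C ^ d := Finset.sum_le_sum (fun i _ => h1 _ (hf i))
      _ = _ := by simp
  obtain ⟨a, ha, b, hb, rfl⟩ := hx
  have := h2 a ha
  have := h2 b hb
  have := abs_sub a b
  simp only
  linarith

lemma dset_base {K : Set ℝ} {u v : ℝ} (hu : u ∈ K) (hv : v ∈ K) (d : ℕ) :
    u ^ d * (u - v) ∈ dset K 1 (d + 1) := by
  have key : ∀ w ∈ K, u ^ d * w ∈ sumN 1 (prodN (d + 1) K) := by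
    intro w hw
    have h1 : u ^ d ∈ prodN d K := ⟨fun _ => u, fun _ => hu, by simp⟩
    have h2 : w ∈ prodN 1 K := ⟨fun _ => w, fun _ => hw, by simp⟩
    exact ⟨fun _ => u ^ d * w, fun _ => prodN_mul h1 h2, by simp⟩
  exact ⟨_, key u hu, _, key v hv, by simp only; ring⟩

/-- Linear combinations with coefficients `a` of elements of `S`. -/
def lin {k : ℕ} (a : Fin k → ℝ) (S : Set ℝ) : Set ℝ :=
  {t | ∃ x : Fin k → ℝ, (∀ i, x i ∈ S) ∧ t = ∑ i, a i * x i}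

lemma exists_pair {k : ℕ} (a : Fin (k + 2) → ℝ) : ∃ i j, i ≠ j ∧ |a j| ≤ |a i| := by
  rcases le_total |a 0| |a 1| with h | h
  · exact ⟨1, 0, by simp, h⟩
  · exact ⟨0, 1, by simp, h⟩

lemma exists_round (b c : ℝ) (h : |b| ≤ |c|) (n : ℕ) :
    ∃ q : ℤ, |q| ≤ n ∧ |n * b - q * c| ≤ |c| := by
  by_cases hc : c = 0
  · subst hc
    have hb : b = 0 := by simpa using h
    exact ⟨0, by simp, by simp [hb]⟩
  have hc' : 0 < |c| := abs_pos.2 hc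
  have hr := abs_sub_round ((n : ℝ) * b / c)
  have h1 : |(n : ℝ) * b / c| ≤ n := by
    rw [abs_div, abs_mul, Nat.abs_cast, div_le_iff₀ hc']
    exact mul_le_mul_of_nonneg_left h (Nat.cast_nonneg n)
  refine ⟨round ((n : ℝ) * b / c), ?_, ?_⟩
  · rw [abs_le] at h1 hr ⊢
    have h2 : (round ((n : ℝ) * b / c) : ℝ) < ((n + 1 : ℤ) : ℝ) := by push_cast; linarith
    have h3 : ((-n - 1 : ℤ) : ℝ) < (round ((n : ℝ) * b / c) : ℝ) := by push_cast; linarith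
    have h2 := Int.cast_lt.1 h2
    have h3 := Int.cast_lt.1 h3
    constructor <;> omega
  · have : (n : ℝ) * b - round ((n : ℝ) * b / c) * c
        = (n * b / c - round ((n : ℝ) * b / c)) * c := by field_simp
    rw [this, abs_mul]
    nlinarith

lemma reduce (C ρ : ℝ) (hC : 0 < C) (hρ : 0 < ρ) (k m d : ℕ) (hm : 0 < m) :
    ∃ m' d' : ℕ, 0 < m' ∧ ∀ K ⊆ Set.Icc (-C) C, ∀ u ∈ K, ∀ v ∈ K,
      ρ ≤ |u - v| → ρ ≤ |u| → ∀ a : Fin (k + 2) → ℝ, (∀ i, |a i| ≤ 1) →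
      Set.Icc (-1) 1 ⊆ lin a (dset K m (d + 1)) →
      ∃ a' : Fin (k + 1) → ℝ, (∀ i, |a' i| ≤ 1) ∧
        Set.Icc (-1) 1 ⊆ lin a' (dset K m' (d' + 1)) := by
  set ε := ρ ^ (d + 1) with hε
  have hε0 : 0 < ε := by positivity
  obtain ⟨L, hL⟩ := exists_nat_ge (max 1 (2 * C ^ (d + 1)))
  obtain ⟨hL1, hL2⟩ := max_le_iff.1 hL
  have hL0 : (0 : ℝ) < L := by linarith
  obtain ⟨n, hn⟩ := exists_nat_ge ((2 * ((L * m : ℕ) * C ^ (d + 1)) + ε) / ε)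
  obtain ⟨Q, hQ⟩ := exists_nat_ge (1 / ε)
  rw [div_le_iff₀ hε0] at hn hQ
  have hQ0 : (0 : ℝ) < Q := by
    by_contra h
    nlinarith
  have hLn : 0 < L := by exact_mod_cast hL0
  have hQn : 0 < Q := by exact_mod_cast hQ0
  set P := n + L * m with hP
  have hP0 : 0 < P := by positivity
  refine ⟨Q * (2 * (P * m) + 2 * (P * m)), d + 1 + d, by positivity, ?_⟩
  intro K hK u hu v hv huv huρ a ha hlin
  obtain ⟨i, j, hij, haij⟩ := exists_pair a
  obtain ⟨q, hq, hqs⟩ := exists_round (a j) (a i) haij n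
  set e := u ^ d * (u - v) with he
  have heE : e ∈ dset K 1 (d + 1) := dset_base hu hv d
  have he1 : ε ≤ |e| := by
    rw [he, abs_mul, abs_pow, hε, pow_succ]
    gcongr
  have he2 : |e| ≤ L := by
    have := dset_bound hK heE
    push_cast at this
    linarith
  have hs : |e * (n * a j - q * a i)| ≤ L := by
    rw [abs_mul]
    calc _ ≤ (L : ℝ) * 1 := by gcongr; exact hqs.trans (ha i)
      _ = L := mul_one _
  obtain ⟨y, hy, hys⟩ := hlin (a := e * (n * a j - q * a i) / L) (by
    rw [Set.mem_Icc, ← abs_le, abs_div, Nat.abs_cast, div_le_one hL0]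
    exact hs)
  rw [div_eq_iff hL0.ne'] at hys
  -- the collision
  set x : Fin (k + 2) → ℝ := fun l =>
    (if l = j then n * e else if l = i then -(q * e) else 0) - L * y l with hx
  have hxE : ∀ l, x l ∈ dset K P (d + 1) := by
    intro l
    have h1 : -((L : ℝ) * y l) ∈ dset K (L * m) (d + 1) := dset_neg (dset_nsmul hu (hy l) L)
    rw [hx, hP]
    simp only [sub_eq_add_neg]
    refine dset_add ?_ h1
    split_ifs
    · simpa using dset_nsmul hu heE n
    · simpa using dset_neg (dset_zsmul hu heE q hq)
    · exact dset_zero hu _ _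
  have hxj : ε ≤ |x j| := by
    have h1 : |(L : ℝ) * y j| ≤ _ := dset_bound hK (dset_nsmul hu (hy j) L)
    have h2 : x j = n * e - L * y j := by simp [hx]
    have h3 : |(n : ℝ) * e| = n * |e| := by rw [abs_mul, Nat.abs_cast]
    have h4 := abs_sub_abs_le_abs_sub ((n : ℝ) * e) (L * y j)
    have h5 : (n : ℝ) * ε ≤ n * |e| := by gcongr
    rw [h2]
    linarith
  have hx0 : ∑ l, a l * x l = 0 := by
    have : ∀ l, a l * x l = ((if l = j then a l * (n * e) else 0)
        + (if l = i then a l * (-(q * e)) else 0)) - (a l * y l) * L := by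
      intro l
      simp only [hx]
      by_cases h1 : l = j
      · have h2 : l ≠ i := by rw [h1]; exact hij.symm
        simp [h1, hij.symm]; ring
      · by_cases h2 : l = i
        · simp [h2, hij]; ring
        · simp [h1, h2]; ring
    simp_rw [this, Finset.sum_sub_distrib, Finset.sum_add_distrib, ← Finset.sum_mul, ← hys]
    simp
    ring
  have hxj0 : x j ≠ 0 := by
    intro h
    rw [h, abs_zero] at hxj
    linarith
  refine ⟨fun l => a (j.succAbove l), fun l => ha _, ?_⟩
  intro t ht
  rw [Set.mem_Icc, ← abs_le] at ht
  obtain ⟨z, hz, hzt⟩ := hlin (a := t / (Q * x j)) (by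
    rw [Set.mem_Icc, ← abs_le, abs_div, abs_mul, Nat.abs_cast]
    apply div_le_one_of_le₀ _ (by positivity)
    have : (Q : ℝ) * ε ≤ Q * |x j| := by gcongr
    linarith)
  refine ⟨fun l => Q * (x j * z (j.succAbove l) + -(x (j.succAbove l) * z j)), ?_, ?_⟩
  · intro l
    have := dset_nsmul hu (dset_add (dset_mul (hxE j) (hz (j.succAbove l)))
      (dset_neg (dset_mul (hxE (j.succAbove l)) (hz j)))) Q
    have h3 : d + 1 + d + 1 = d + 1 + (d + 1) := by ring
    rw [h3]
    exact this
  · have h1 : t = ∑ l, a l * (Q * (x j * z l + -(x l * z j))) := by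
      have : ∀ l, a l * (Q * (x j * z l + -(x l * z j)))
        = (a l * z l) * (Q * x j) - (a l * x l) * (Q * z j) := fun l => by ring
      simp_rw [this, Finset.sum_sub_distrib, ← Finset.sum_mul, hx0, ← hzt]
      field_simp
      ring
    rw [h1, Fin.sum_univ_succAbove _ j]
    ring_nf

lemma reduce_all (C ρ : ℝ) (hC : 0 < C) (hρ : 0 < ρ) (k : ℕ) : ∀ (m d : ℕ), 0 < m →
    ∃ m' d' : ℕ, 0 < m' ∧ ∀ K ⊆ Set.Icc (-C) C, ∀ u ∈ K, ∀ v ∈ K,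
      ρ ≤ |u - v| → ρ ≤ |u| → ∀ a : Fin (k + 1) → ℝ, (∀ i, |a i| ≤ 1) →
      Set.Icc (-1) 1 ⊆ lin a (dset K m (d + 1)) →
      ∃ b : ℝ, |b| ≤ 1 ∧ Set.Icc (-1) 1 ⊆ b • dset K m' (d' + 1) := by
  induction k with
  | zero =>
    intro m d hm
    refine ⟨m, d, hm, ?_⟩
    intro K hK u hu v hv huv huρ a ha hlin
    refine ⟨a 0, ha 0, fun t ht => ?_⟩
    obtain ⟨x, hx, rfl⟩ := hlin ht
    exact ⟨x 0, hx 0, by simp⟩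
  | succ k ih =>
    intro m d hm
    obtain ⟨m₁, d₁, hm₁, h₁⟩ := reduce C ρ hC hρ k m d hm
    obtain ⟨m₂, d₂, hm₂, h₂⟩ := ih m₁ d₁ hm₁
    refine ⟨m₂, d₂, hm₂, ?_⟩
    intro K hK u hu v hv huv huρ a ha hlin
    obtain ⟨a', ha', hl'⟩ := h₁ K hK u hu v hv huv huρ a ha hlin
    exact h₂ K hK u hu v hv huv huρ a' ha' hl'

lemma volume_dset_of_interval {S : Set ℝ} {b : ℝ} (hb : |b| ≤ 1)
    (h : Set.Icc (-1) 1 ⊆ b • S) : 2 ≤ volume S := by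
  have h1 : volume (Set.Icc (-1 : ℝ) 1) ≤ volume (b • S) := measure_mono h
  rw [Measure.addHaar_smul, Real.volume_Icc] at h1
  calc (2 : ℝ≥0∞) = ENNReal.ofReal (1 - -1) := by norm_num
    _ ≤ _ := h1
    _ ≤ 1 * volume S := by
        gcongr
        simpa using hb
    _ = _ := one_mul _

lemma volume_dset_final {K : Set ℝ} {u ρ : ℝ} (hu : u ∈ K) (hρ : 0 < ρ) (huρ : ρ ≤ |u|)
    {m d N : ℕ} (hm : m ≤ N) (hd : d ≤ N) (h : 2 ≤ volume (dset K m d)) :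
    ENNReal.ofReal (ρ ^ (N - d)) ≤ volume (dset K N N) := by
  have hsub : (u ^ (N - d)) • dset K m d ⊆ dset K N N := by
    rintro _ ⟨x, ⟨a, ha, b, hb, rfl⟩, rfl⟩
    have key : ∀ w ∈ sumN m (prodN d K), u ^ (N - d) * w ∈ sumN m (prodN N K) := by
      rintro w ⟨f, hf, rfl⟩
      refine ⟨fun i => u ^ (N - d) * f i, fun i => ?_, by rw [Finset.mul_sum]⟩
      have h1 : u ^ (N - d) ∈ prodN (N - d) K := ⟨fun _ => u, fun _ => hu, by simp⟩
      have := prodN_mul h1 (hf i)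
      rwa [Nat.sub_add_cancel hd] at this
    apply dset_mono hu hm
    exact ⟨_, key a ha, _, key b hb, by simp only [smul_eq_mul]; ring⟩
  have h1 := measure_mono (μ := volume) hsub
  rw [Measure.addHaar_smul] at h1
  refine le_trans ?_ h1
  calc ENNReal.ofReal (ρ ^ (N - d)) = ENNReal.ofReal (ρ ^ (N - d)) * 1 := (mul_one _).symm
    _ ≤ _ := by
      gcongr
      · simp only [Module.finrank_self, pow_one, abs_pow]
        gcongr
      · exact le_trans (by norm_num) h

/-- Covering argument: a set of positive measure generates an interval in boundedly many steps. -/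
lemma interval_of_volume {S : Set ℝ} {c M : ℝ} (hS : IsCompact S)
    (hSM : S ⊆ Set.Icc (-M) M) (hc : 0 < c) (hv : ENNReal.ofReal c ≤ volume S)
    (T : ℕ → Set ℝ) (h0 : (0 : ℝ) ∈ T 0)
    (hT : ∀ j, ∀ x ∈ T j, ∀ s ∈ S, ∀ s' ∈ S, x + (s - s') ∈ T (j + 1))
    (n : ℕ) (hn : 2 * (M + 1) < n * c) : Set.Icc (-1) 1 ⊆ T (2 * n) := by
  have hvpos : 0 < volume S := lt_of_lt_of_le (by simpa using hc) hv
  obtain ⟨s₀, hs₀⟩ : S.Nonempty := nonempty_of_measure_ne_zero hvpos.ne'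
  have hmono : Monotone T := monotone_nat_of_le_succ (fun j x hx => by
    simpa using hT j x hx s₀ hs₀ s₀ hs₀)
  have hnhds : S - S ∈ nhds (0 : ℝ) :=
    Measure.sub_mem_nhds_zero_of_addHaar_pos volume S hS.measurableSet hvpos
  intro z hz
  by_contra hzT
  obtain ⟨r, hr, hball⟩ := Metric.mem_nhds_iff.1 hnhds
  obtain ⟨q, hq⟩ := exists_nat_gt (1 / r)
  have hq0 : (0 : ℝ) < q := lt_trans (by positivity) hq
  have hstep : z / q ∈ S - S := by
    apply hball
    rw [mem_ball_zero_iff, Real.norm_eq_abs, abs_div, Nat.abs_cast, div_lt_iff₀ hq0]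
    rw [div_lt_iff₀ hr] at hq
    have := abs_le.2 hz
    linarith
  obtain ⟨s₁, hs₁, s₂, hs₂, hss⟩ := hstep
  have hex : ∀ j, j ≤ 2 * n → ∃ y ∈ Set.Icc (-1 : ℝ) 1, y ∈ T (j + 1) ∧ y ∉ T j := by
    intro j hj
    have hP : ∃ i : ℕ, i ≤ q ∧ (i : ℝ) * (z / q) ∉ T j :=
      ⟨q, le_rfl, by rw [mul_div_cancel₀ _ hq0.ne']; exact fun h => hzT (hmono hj h)⟩
    classical
    have hspec := Nat.find_spec hP
    have hmin := fun m => @Nat.find_min _ _ hP m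
    rcases hfi : Nat.find hP with _ | i
    · rw [hfi] at hspec
      exact absurd (hmono (Nat.zero_le j) h0) (by simpa using hspec.2)
    · rw [hfi] at hspec hmin
      refine ⟨((i + 1 : ℕ) : ℝ) * (z / q), ?_, ?_, hspec.2⟩
      · rw [Set.mem_Icc, ← abs_le, abs_mul, abs_div, Nat.abs_cast, Nat.abs_cast, ← mul_div_assoc,
          div_le_one hq0]
        have h1 : ((i + 1 : ℕ) : ℝ) ≤ q := by exact_mod_cast hspec.1
        have h2 := abs_le.2 hz
        nlinarith [abs_nonneg z]
      · have hi : (i : ℝ) * (z / q) ∈ T j := by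
          by_contra hcon
          exact hmin i (Nat.lt_succ_self i) ⟨by omega, hcon⟩
        have := hT j _ hi s₁ hs₁ s₂ hs₂
        simp only at hss
        rw [hss] at this
        convert this using 1
        push_cast; ring
  choose! y hyI hy1 hy2 using hex
  have hdisj : Set.PairwiseDisjoint (↑(Finset.range n)) (fun i : ℕ => (fun s => y (2 * i) + s) '' S) := by
    have key : ∀ i j, i < j → j < n →
        Disjoint ((fun s => y (2 * i) + s) '' S) ((fun s => y (2 * j) + s) '' S) := by
      intro i j hij hj
      rw [Set.disjoint_left]
      rintro _ ⟨s, hs, rfl⟩ ⟨s', hs', h⟩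
      apply hy2 (2 * j) (by omega)
      have h1 := hT _ _ (hy1 (2 * i) (by omega)) s hs s' hs'
      have h2 : y (2 * j) = y (2 * i) + (s - s') := by simp only at h; linarith
      rw [h2]
      exact hmono (by omega) h1
    intro i hi j hj hij
    simp only [Finset.coe_range, Set.mem_Iio] at hi hj
    rcases lt_or_gt_of_ne hij with h | h
    · exact key i j h hj
    · exact (key j i h hi).symm
  have hmeas : volume (⋃ i ∈ Finset.range n, (fun s => y (2 * i) + s) '' S)
      = ∑ i ∈ Finset.range n, volume ((fun s => y (2 * i) + s) '' S) :=
    measure_biUnion_finset hdisj (fun i _ =>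
      (hS.image (by fun_prop)).measurableSet)
  have hsub : (⋃ i ∈ Finset.range n, (fun s => y (2 * i) + s) '' S)
      ⊆ Set.Icc (-(M + 1)) (M + 1) := by
    intro x hx
    simp only [Set.mem_iUnion, Finset.mem_range] at hx
    obtain ⟨i, hi, s, hs, rfl⟩ := hx
    have h1 := hSM hs
    have h2 := hyI (2 * i) (by omega)
    constructor <;> linarith [h1.1, h1.2, h2.1, h2.2]
  have h1 := measure_mono (μ := volume) hsub
  rw [hmeas, Real.volume_Icc] at h1
  simp only [Set.image_add_left, measure_preimage_add, Finset.sum_const, Finset.card_range,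
    nsmul_eq_mul] at h1
  have h2 : ENNReal.ofReal (n * c) ≤ ENNReal.ofReal (M + 1 - -(M + 1)) := by
    rw [ENNReal.ofReal_mul (by positivity), ENNReal.ofReal_natCast]
    exact le_trans (by gcongr) h1
  have hM : 0 ≤ M := by
    have := hSM hs₀
    linarith [this.1, this.2]
  rw [ENNReal.ofReal_le_ofReal_iff (by linarith)] at h2
  linarith


lemma thick_lemma (m : Measure ℝ) [IsProbabilityMeasure m] (S : Set ℝ) (hS : m Sᶜ = 0)
    {B r : ℝ} (hB : 0 < B) (hr : 0 < r)
    (h : (m.prod m) {p : ℝ × ℝ | |p.1 - p.2| ≤ 2 * r} ≤ ENNReal.ofReal (B * (2 * r))) :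
    ENNReal.ofReal B⁻¹ ≤ volume (Metric.cthickening r S) := by
  set V := volume (Metric.cthickening r S) with hV
  by_cases hVt : V = ∞
  · rw [hVt]; exact le_top
  set f : ℝ → ℝ≥0∞ := fun t => m (Metric.closedBall t r) with hf
  -- first moment
  have hA : MeasurableSet {p : ℝ × ℝ | |p.2 - p.1| ≤ r} :=
    measurableSet_le (by fun_prop) measurable_const
  have h1 : ∫⁻ t, f t = ENNReal.ofReal (2 * r) := by
    have e1 := Measure.prod_apply (μ := volume) (ν := m) hA
    have e2 := Measure.prod_apply_symm (μ := volume) (ν := m) hA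
    have e3 : ∀ t : ℝ, Prod.mk t ⁻¹' {p : ℝ × ℝ | |p.2 - p.1| ≤ r} = Metric.closedBall t r := by
      intro t; ext x; simp [Real.dist_eq]
    have e4 : ∀ x : ℝ, (fun t => (t, x)) ⁻¹' {p : ℝ × ℝ | |p.2 - p.1| ≤ r}
        = Metric.closedBall x r := by
      intro t; ext x; simp [Real.dist_eq, abs_sub_comm]
    simp_rw [e3] at e1
    simp_rw [e4, Real.volume_closedBall] at e2
    rw [hf, ← e1, e2]; simp
  -- second moment
  have hA2 : MeasurableSet {p : ℝ × (ℝ × ℝ) | |p.2.1 - p.1| ≤ r ∧ |p.2.2 - p.1| ≤ r} := by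
    have q1 : MeasurableSet {p : ℝ × (ℝ × ℝ) | |p.2.1 - p.1| ≤ r} :=
      measurableSet_le (by fun_prop) measurable_const
    have q2 : MeasurableSet {p : ℝ × (ℝ × ℝ) | |p.2.2 - p.1| ≤ r} :=
      measurableSet_le (by fun_prop) measurable_const
    exact q1.inter q2
  have h2 : ∫⁻ t, f t * f t ≤ ENNReal.ofReal (2 * r) * ENNReal.ofReal (B * (2 * r)) := by
    have e1 := Measure.prod_apply (μ := volume) (ν := m.prod m) hA2
    have e2 := Measure.prod_apply_symm (μ := volume) (ν := m.prod m) hA2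
    have e3 : ∀ t : ℝ, (m.prod m) (Prod.mk t ⁻¹'
        {p : ℝ × (ℝ × ℝ) | |p.2.1 - p.1| ≤ r ∧ |p.2.2 - p.1| ≤ r}) = f t * f t := by
      intro t
      rw [hf, ← Measure.prod_prod]
      congr 1
    simp_rw [e3] at e1
    rw [← e1, e2]
    have hD : MeasurableSet {p : ℝ × ℝ | |p.1 - p.2| ≤ 2 * r} :=
      measurableSet_le (by fun_prop) measurable_const
    calc _ ≤ ∫⁻ p, ({p : ℝ × ℝ | |p.1 - p.2| ≤ 2 * r}).indicator
            (fun _ => ENNReal.ofReal (2 * r)) p ∂(m.prod m) := by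
          apply lintegral_mono
          intro p
          by_cases hp : |p.1 - p.2| ≤ 2 * r
          · have hp' : p ∈ {p : ℝ × ℝ | |p.1 - p.2| ≤ 2 * r} := hp
            rw [Set.indicator_of_mem hp', ← Real.volume_closedBall p.1 r]
            apply measure_mono
            intro t ht
            have := ht.1
            simp only at this
            rwa [Metric.mem_closedBall, dist_comm, Real.dist_eq]
          · have hp' : p ∉ {p : ℝ × ℝ | |p.1 - p.2| ≤ 2 * r} := hp
            rw [Set.indicator_of_notMem hp']
            simp only [nonpos_iff_eq_zero]
            convert measure_empty (μ := (volume : Measure ℝ))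
            ext t
            simp only [Set.mem_preimage, Set.mem_ofPred, Set.mem_empty_iff_false, iff_false]
            rintro ⟨h3, h4⟩
            apply hp
            rw [abs_le] at *
            constructor <;> linarith [h3.1, h3.2, h4.1, h4.2]
      _ = ENNReal.ofReal (2 * r) * (m.prod m) {p : ℝ × ℝ | |p.1 - p.2| ≤ 2 * r} :=
          lintegral_indicator_const hD _
      _ ≤ _ := by gcongr
  -- Cauchy-Schwarz
  set l : ℝ := 2 * r * B with hl
  have hl0 : 0 < l := by positivity
  have hf1 : ∀ t, f t ≤ 1 := fun t => prob_le_one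
  have hpt : ∀ t, ENNReal.ofReal (2 * l) * f t ≤ f t * f t +
      (Metric.cthickening r S).indicator (fun _ => ENNReal.ofReal (l ^ 2)) t := by
    intro t
    by_cases ht : t ∈ Metric.cthickening r S
    · rw [Set.indicator_of_mem ht]
      have hft : f t = ENNReal.ofReal (f t).toReal :=
        (ENNReal.ofReal_toReal (ne_top_of_le_ne_top ENNReal.one_ne_top (hf1 t))).symm
      rw [hft, ← ENNReal.ofReal_mul (by positivity), ← ENNReal.ofReal_mul (by positivity),
        ← ENNReal.ofReal_add (by positivity) (by positivity)]
      apply ENNReal.ofReal_le_ofReal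
      nlinarith [sq_nonneg ((f t).toReal - l)]
    · have : f t = 0 := by
        refine measure_mono_null ?_ hS
        intro x hx hxS
        apply ht
        exact Metric.mem_cthickening_of_dist_le t x r S hxS (by rwa [dist_comm])
      simp [this]
  have hfm : Measurable f := by
    have := measurable_measure_prodMk_left (ν := m) hA
    have e3 : ∀ t : ℝ, Prod.mk t ⁻¹' {p : ℝ × ℝ | |p.2 - p.1| ≤ r} = Metric.closedBall t r := by
      intro t; ext x; simp [Real.dist_eq]
    simpa only [e3] using this
  have h3 := lintegral_mono (μ := volume) hpt
  rw [lintegral_const_mul _ hfm, lintegral_add_left (f := fun t => f t * f t) (hfm.mul hfm),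
    lintegral_indicator_const Metric.isClosed_cthickening.measurableSet, h1, ← hV] at h3
  have h4 := h3.trans (add_le_add_left h2 _)
  have hVr : V = ENNReal.ofReal V.toReal := (ENNReal.ofReal_toReal hVt).symm
  rw [hVr] at h4 ⊢
  have hV0 : 0 ≤ V.toReal := ENNReal.toReal_nonneg
  rw [← ENNReal.ofReal_mul (by positivity), ← ENNReal.ofReal_mul (by positivity),
    ← ENNReal.ofReal_mul (by positivity), ← ENNReal.ofReal_add (by positivity) (by positivity),
    ENNReal.ofReal_le_ofReal_iff (by positivity)] at h4
  apply ENNReal.ofReal_le_ofReal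
  rw [inv_le_iff_one_le_mul₀ hB]
  have h5 : (4 * r ^ 2 * B) * 1 ≤ (4 * r ^ 2 * B) * (V.toReal * B) := by
    rw [hl] at h4; nlinarith
  exact le_of_mul_le_mul_left h5 (by positivity)

lemma slab_bound {k : ℕ} (z : Fin (k + 1) → ℝ) {δ : ℝ} (hδ : 0 < δ) :
    volume (Set.Icc (0 : Fin (k + 1) → ℝ) 1 ∩ {a | |∑ i, a i * z i| ≤ δ})
      ≤ ENNReal.ofReal (2 * δ) * (ENNReal.ofReal ‖z‖)⁻¹ := by
  by_cases hz : z = 0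
  · subst hz
    simp [ENNReal.mul_top, hδ]
  obtain ⟨i, hi⟩ := Finite.exists_max (fun i => ‖z i‖)
  have hzi : ‖z‖ = |z i| :=
    le_antisymm ((pi_norm_le_iff_of_nonneg (norm_nonneg _)).2 hi) (norm_le_pi_norm z i)
  have hzi0 : 0 < |z i| := by rw [← hzi]; exact norm_pos_iff.2 hz
  set W : Set (ℝ × (Fin k → ℝ)) := {p | p.2 ∈ Set.Icc (0 : Fin k → ℝ) 1 ∧
    |p.1 * z i + ∑ j, p.2 j * z (i.succAbove j)| ≤ δ} with hW
  have hWm : MeasurableSet W := by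
    have q1 : MeasurableSet {p : ℝ × (Fin k → ℝ) | p.2 ∈ Set.Icc (0 : Fin k → ℝ) 1} :=
      measurableSet_Icc.preimage measurable_snd
    have q2 : MeasurableSet {p : ℝ × (Fin k → ℝ) |
        |p.1 * z i + ∑ j, p.2 j * z (i.succAbove j)| ≤ δ} :=
      measurableSet_le (by fun_prop) measurable_const
    exact q1.inter q2
  have hmp := volume_preserving_piFinSuccAbove (fun _ : Fin (k + 1) => ℝ) i
  have hsub : Set.Icc (0 : Fin (k + 1) → ℝ) 1 ∩ {a | |∑ i, a i * z i| ≤ δ} ⊆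
      (MeasurableEquiv.piFinSuccAbove (fun _ : Fin (k + 1) => ℝ) i) ⁻¹' W := by
    rintro a ⟨ha, ha'⟩
    refine ⟨⟨fun j => ha.1 _, fun j => ha.2 _⟩, ?_⟩
    have h2 : |∑ i, a i * z i| ≤ δ := ha'
    rw [Fin.sum_univ_succAbove _ i] at h2
    exact h2
  refine (measure_mono hsub).trans ?_
  rw [hmp.measure_preimage hWm.nullMeasurableSet]
  have e : (volume : Measure (ℝ × (Fin k → ℝ))) = (volume : Measure ℝ).prod volume := rfl
  rw [e, Measure.prod_apply_symm hWm]
  calc _ ≤ ∫⁻ b : Fin k → ℝ, (Set.Icc (0 : Fin k → ℝ) 1).indicator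
        (fun _ => ENNReal.ofReal (2 * δ) * (ENNReal.ofReal ‖z‖)⁻¹) b := by
        apply lintegral_mono
        intro b
        by_cases hb : b ∈ Set.Icc (0 : Fin k → ℝ) 1
        · rw [Set.indicator_of_mem hb]
          set w := ∑ j, b j * z (i.succAbove j) with hw
          have hs : (fun t => (t, b)) ⁻¹' W ⊆ Metric.closedBall (-w / z i) (δ / |z i|) := by
            rintro t ⟨-, ht⟩
            have hzne : z i ≠ 0 := abs_pos.1 hzi0
            rw [Metric.mem_closedBall, Real.dist_eq, le_div_iff₀ hzi0, ← abs_mul]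
            have hh : (t - -w / z i) * z i = t * z i + w := by
              field_simp
              ring
            rw [hh]
            exact ht
          refine (measure_mono hs).trans ?_
          rw [Real.volume_closedBall, hzi, ← ENNReal.ofReal_inv_of_pos hzi0,
            ← ENNReal.ofReal_mul (by positivity)]
          apply le_of_eq
          congr 1
          field_simp
        · rw [Set.indicator_of_notMem hb]
          simp only [nonpos_iff_eq_zero]
          convert measure_empty (μ := (volume : Measure ℝ))
          ext t
          simp only [hW, Set.mem_preimage, Set.mem_ofPred, hb, false_and, Set.mem_empty_iff_false]
    _ = ENNReal.ofReal (2 * δ) * (ENNReal.ofReal ‖z‖)⁻¹ * volume (Set.Icc (0 : Fin k → ℝ) 1) :=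
        lintegral_indicator_const measurableSet_Icc _
    _ = _ := by simp [Real.volume_Icc_pi]

lemma inv_le_dyadic (s : ℝ) (hs : 0 ≤ s) : (ENNReal.ofReal s)⁻¹ ≤
    1 + ∑' n : ℕ, (Set.Iic ((2⁻¹ : ℝ) ^ n)).indicator (fun _ => (2 : ℝ≥0∞) ^ (n + 1)) s := by
  rcases hs.eq_or_lt with rfl | hs
  · have : ∑' n : ℕ, (Set.Iic ((2⁻¹ : ℝ) ^ n)).indicator (fun _ => (2 : ℝ≥0∞) ^ (n + 1)) (0 : ℝ)
        = ∞ := by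
      rw [eq_top_iff, ← ENNReal.tsum_const_eq_top_of_ne_zero (α := ℕ) (one_ne_zero (α := ℝ≥0∞))]
      apply ENNReal.tsum_le_tsum
      intro n
      rw [Set.indicator_of_mem (by simp)]
      exact one_le_pow₀ (by norm_num)
    rw [this]; simp
  rcases le_total 1 s with h1 | h1
  · refine le_trans ?_ le_self_add
    rw [ENNReal.inv_le_one]
    simpa using h1
  · obtain ⟨n, hn1, hn2⟩ := exists_nat_pow_near_of_lt_one hs h1 (y := (2⁻¹ : ℝ))
      (by norm_num) (by norm_num)
    refine le_trans ?_ (le_trans (ENNReal.le_tsum n) le_add_self)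
    rw [Set.indicator_of_mem (by exact hn2), ENNReal.inv_le_iff_inv_le]
    calc ((2 : ℝ≥0∞) ^ (n + 1))⁻¹ = ENNReal.ofReal ((2⁻¹) ^ (n + 1)) := by
          rw [inv_pow, ENNReal.ofReal_inv_of_pos (by positivity), ENNReal.ofReal_pow (by norm_num)]
          simp
      _ ≤ _ := ENNReal.ofReal_le_ofReal hn1.le

lemma energy_bound {κ C : ℝ} {k : ℕ} (hC : 0 < C) (hk : 2 ≤ κ * k)
    (μ : Measure ℝ) [IsProbabilityMeasure μ] (x : Fin k → ℝ)
    (hx : ∀ i, ∀ r : ℝ, 0 < r → μ (Metric.closedBall (x i) r) ≤ ENNReal.ofReal (C * r ^ κ)) :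
    ∫⁻ y, (ENNReal.ofReal ‖x - y‖)⁻¹ ∂(Measure.pi (fun _ : Fin k => μ))
      ≤ ENNReal.ofReal (1 + 4 * C ^ k) := by
  set ν := Measure.pi (fun _ : Fin k => μ) with hν
  have hball : ∀ n : ℕ, ν (Metric.closedBall x ((2⁻¹ : ℝ) ^ n)) ≤
      ENNReal.ofReal (C ^ k * ((2⁻¹) ^ n) ^ 2) := by
    intro n
    have hr : (0 : ℝ) < 2⁻¹ ^ n := by positivity
    rw [hν, Measure.pi_closedBall _ _ hr.le]
    calc _ ≤ ∏ _i : Fin k, ENNReal.ofReal (C * (2⁻¹ ^ n) ^ κ) :=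
          Finset.prod_le_prod' (fun i _ => hx i _ hr)
      _ = ENNReal.ofReal ((C * (2⁻¹ ^ n) ^ κ) ^ k) := by
          rw [Finset.prod_const, Finset.card_univ, Fintype.card_fin,
            ENNReal.ofReal_pow (by positivity)]
      _ ≤ _ := by
          apply ENNReal.ofReal_le_ofReal
          rw [mul_pow, ← Real.rpow_natCast (((2⁻¹ : ℝ) ^ n) ^ κ) k, ← Real.rpow_mul hr.le,
            ← Real.rpow_natCast ((2⁻¹ : ℝ) ^ n) 2]
          gcongr ?_ * ?_
          apply Real.rpow_le_rpow_of_exponent_ge hr (pow_le_one₀ (by norm_num) (by norm_num))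
          exact_mod_cast hk
  have hset : ∀ n : ℕ, ∀ y, (Set.Iic ((2⁻¹ : ℝ) ^ n)).indicator
      (fun _ => (2 : ℝ≥0∞) ^ (n + 1)) ‖x - y‖
      = (Metric.closedBall x ((2⁻¹ : ℝ) ^ n)).indicator (fun _ => (2 : ℝ≥0∞) ^ (n + 1)) y := by
    intro n y
    simp only [Set.indicator, Set.mem_Iic, Metric.mem_closedBall, dist_eq_norm, norm_sub_rev x y]
  calc _ ≤ ∫⁻ y, (1 + ∑' n : ℕ, (Metric.closedBall x ((2⁻¹ : ℝ) ^ n)).indicator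
            (fun _ => (2 : ℝ≥0∞) ^ (n + 1)) y) ∂ν := by
        apply lintegral_mono
        intro y
        have := inv_le_dyadic ‖x - y‖ (norm_nonneg _)
        simpa only [hset] using this
    _ = 1 + ∑' n : ℕ, (2 : ℝ≥0∞) ^ (n + 1) * ν (Metric.closedBall x ((2⁻¹ : ℝ) ^ n)) := by
        rw [lintegral_add_left measurable_const, lintegral_tsum]
        · simp only [lintegral_const, measure_univ, mul_one]
          congr 1
          congr 1
          ext n
          rw [lintegral_indicator_const Metric.isClosed_closedBall.measurableSet]
        · intro n
          exact (measurable_const.indicator Metric.isClosed_closedBall.measurableSet).aemeasurable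
    _ ≤ 1 + ∑' n : ℕ, ENNReal.ofReal (2 * C ^ k * (2⁻¹) ^ n) := by
        gcongr with n
        calc _ ≤ (2 : ℝ≥0∞) ^ (n + 1) * ENNReal.ofReal (C ^ k * ((2⁻¹) ^ n) ^ 2) := by
              gcongr; exact hball n
          _ = ENNReal.ofReal (2 ^ (n + 1)) * ENNReal.ofReal (C ^ k * ((2⁻¹) ^ n) ^ 2) := by
              rw [ENNReal.ofReal_pow (by norm_num)]; simp
          _ = _ := by
              rw [← ENNReal.ofReal_mul (by positivity)]
              congr 1
              rw [inv_pow, pow_succ]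
              field_simp
    _ = _ := by
        rw [← ENNReal.ofReal_tsum_of_nonneg (fun n => by positivity)
          ((summable_geometric_of_lt_one (by norm_num) (by norm_num)).mul_left _),
          tsum_mul_left, tsum_geometric_inv_two, ENNReal.ofReal_add (by norm_num) (by positivity)]
        simp only [ENNReal.ofReal_one]
        congr 2
        ring

/-- Quantitative Marstrand projection: some combination `∑ a i • K` has positive measure. -/
lemma marstrand {κ C : ℝ} {k : ℕ} (hC : 0 < C) (hk : 2 ≤ κ * (k + 1 : ℕ))
    (μ : Measure ℝ) [IsProbabilityMeasure μ] (K : Set ℝ) (hK : IsCompact K) (hμK : μ Kᶜ = 0)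
    (hx : ∀ x ∈ K, ∀ r : ℝ, 0 < r → μ (Metric.closedBall x r) ≤ ENNReal.ofReal (C * r ^ κ)) :
    ∃ a : Fin (k + 1) → ℝ, (∀ i, |a i| ≤ 1) ∧ IsCompact (lin a K) ∧
      ENNReal.ofReal (2 * (1 + 4 * C ^ (k + 1)) + 1)⁻¹ ≤ volume (lin a K) := by
  set ν := Measure.pi (fun _ : Fin (k + 1) => μ) with hν
  set A := 1 + 4 * C ^ (k + 1) with hA
  have hA0 : 0 < A := by positivity
  set box := Set.Icc (0 : Fin (k + 1) → ℝ) 1 with hbox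
  set lam := (volume : Measure (Fin (k + 1) → ℝ)).restrict box with hlam
  have hboxm : MeasurableSet box := measurableSet_Icc
  have : IsProbabilityMeasure lam := ⟨by
    rw [hlam, Measure.restrict_apply_univ, hbox, Real.volume_Icc_pi]; simp⟩
  have hνK : ∀ᵐ x ∂ν, ∀ i, x i ∈ K := by
    rw [ae_all_iff]
    intro i
    exact (Measure.quasiMeasurePreserving_eval (fun _ : Fin (k + 1) => μ) i).ae
      (show ∀ᵐ x ∂μ, x ∈ K from hμK)
  have hGm : ∀ δ : ℝ, MeasurableSet {q : (Fin (k + 1) → ℝ) × ((Fin (k + 1) → ℝ) × (Fin (k + 1) → ℝ)) |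
      |∑ i, q.1 i * (q.2.1 i - q.2.2 i)| ≤ δ} := fun δ =>
    measurableSet_le (by fun_prop) measurable_const
  set F : ℕ → (Fin (k + 1) → ℝ) → ℝ≥0∞ := fun n a => ENNReal.ofReal (n + 1) *
    (ν.prod ν) (Prod.mk a ⁻¹' {q : (Fin (k + 1) → ℝ) × ((Fin (k + 1) → ℝ) × (Fin (k + 1) → ℝ)) |
      |∑ i, q.1 i * (q.2.1 i - q.2.2 i)| ≤ 1 / ((n : ℝ) + 1)}) with hF
  have hFm : ∀ n, Measurable (F n) := fun n =>
    (measurable_measure_prodMk_left (hGm _)).const_mul _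
  have hFint : ∀ n, ∫⁻ a, F n a ∂lam ≤ ENNReal.ofReal (2 * A) := by
    intro n
    have hδ : (0 : ℝ) < 1 / ((n : ℝ) + 1) := by positivity
    rw [hF]
    simp only
    rw [lintegral_const_mul _ (measurable_measure_prodMk_left (hGm _)),
      ← Measure.prod_apply (hGm _), Measure.prod_apply_symm (hGm _)]
    have hinner : ∫⁻ p, lam ((fun a => (a, p)) ⁻¹'
        {q : (Fin (k + 1) → ℝ) × ((Fin (k + 1) → ℝ) × (Fin (k + 1) → ℝ)) |
        |∑ i, q.1 i * (q.2.1 i - q.2.2 i)| ≤ 1 / ((n : ℝ) + 1)}) ∂(ν.prod ν)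
        ≤ ENNReal.ofReal (2 * (1 / ((n : ℝ) + 1))) * ENNReal.ofReal A := by
      calc _ ≤ ∫⁻ p, ENNReal.ofReal (2 * (1 / ((n : ℝ) + 1))) *
            (ENNReal.ofReal ‖p.1 - p.2‖)⁻¹ ∂(ν.prod ν) := by
            apply lintegral_mono
            intro p
            have := slab_bound (p.1 - p.2) hδ
            rw [hlam]
            simp only
            rw [Measure.restrict_apply' hboxm, Set.inter_comm]
            exact this
        _ = ENNReal.ofReal (2 * (1 / ((n : ℝ) + 1))) *
            ∫⁻ x, ∫⁻ y, (ENNReal.ofReal ‖x - y‖)⁻¹ ∂ν ∂ν := by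
            rw [lintegral_const_mul _ (by fun_prop), lintegral_prod _ (by fun_prop)]
        _ ≤ ENNReal.ofReal (2 * (1 / ((n : ℝ) + 1))) * ∫⁻ x, ENNReal.ofReal A ∂ν := by
            gcongr 1
            apply lintegral_mono_ae
            filter_upwards [hνK] with x hxK
            exact energy_bound hC hk μ x (fun i => hx _ (hxK i))
        _ = _ := by simp
    calc _ ≤ ENNReal.ofReal (n + 1) *
          (ENNReal.ofReal (2 * (1 / ((n : ℝ) + 1))) * ENNReal.ofReal A) := by gcongr
      _ = _ := by
        rw [← ENNReal.ofReal_mul (by positivity), ← ENNReal.ofReal_mul (by positivity)]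
        congr 1
        field_simp
  have hfatou : ∫⁻ a, Filter.liminf (fun n => F n a) Filter.atTop ∂lam ≤ ENNReal.ofReal (2 * A) :=
    (lintegral_liminf_le hFm).trans
      (Filter.liminf_le_of_frequently_le' (Filter.Frequently.of_forall hFint))
  obtain ⟨a, haN, haF⟩ := exists_notMem_null_le_lintegral (μ := lam) (N := boxᶜ)
    (f := fun a => Filter.liminf (fun n => F n a) Filter.atTop)
    (Measurable.liminf hFm).aemeasurable (by rw [hlam, Measure.restrict_apply' hboxm]; simp)
  have habox : a ∈ box := by simpa using haN
  have hlt : Filter.liminf (fun n => F n a) Filter.atTop < ENNReal.ofReal (2 * A + 1) := by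
    refine (haF.trans hfatou).trans_lt ?_
    rw [ENNReal.ofReal_lt_ofReal_iff (by positivity)]
    linarith
  have hfreq := Filter.frequently_lt_of_liminf_lt (by isBoundedDefault) hlt
  set φ : (Fin (k + 1) → ℝ) → ℝ := fun x => ∑ i, a i * x i with hφ
  have hφc : Continuous φ := by fun_prop
  have hlin : lin a K = φ '' (Set.univ.pi (fun _ => K)) := by
    ext t
    constructor
    · rintro ⟨x, hx, rfl⟩
      exact ⟨x, fun i _ => hx i, rfl⟩
    · rintro ⟨x, hx, rfl⟩
      exact ⟨x, fun i => hx i trivial, rfl⟩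
  have hcomp : IsCompact (lin a K) := by
    rw [hlin]
    exact (isCompact_univ_pi (fun _ => hK)).image hφc
  refine ⟨a, fun i => abs_le.2 ⟨by have := habox.1 i; simp at this; linarith, habox.2 i⟩,
    hcomp, ?_⟩
  set m := ν.map φ with hm
  have : IsProbabilityMeasure m := Measure.isProbabilityMeasure_map hφc.aemeasurable
  have hmS : m (lin a K)ᶜ = 0 := by
    rw [hm, Measure.map_apply hφc.measurable hcomp.measurableSet.compl]
    refine measure_mono_null ?_ hνK
    intro x hx hxK
    exact hx ⟨x, hxK, rfl⟩
  have hthick : ∃ᶠ n : ℕ in Filter.atTop, ENNReal.ofReal (2 * A + 1)⁻¹ ≤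
      volume (Metric.cthickening ((1 / ((n : ℝ) + 1)) / 2) (lin a K)) := by
    refine hfreq.mono ?_
    intro n hn
    apply thick_lemma m (lin a K) hmS (by positivity) (by positivity)
    rw [mul_div_cancel₀ _ (two_ne_zero), hm, Measure.map_prod_map _ _ hφc.measurable hφc.measurable,
      Measure.map_apply (by fun_prop) (measurableSet_le (by fun_prop) measurable_const)]
    have hn' := hn.le
    rw [hF] at hn'
    simp only at hn'
    have hset : Prod.map φ φ ⁻¹' {p : ℝ × ℝ | |p.1 - p.2| ≤ 1 / ((n : ℝ) + 1)} = Prod.mk a ⁻¹'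
        {q : (Fin (k + 1) → ℝ) × ((Fin (k + 1) → ℝ) × (Fin (k + 1) → ℝ)) |
        |∑ i, q.1 i * (q.2.1 i - q.2.2 i)| ≤ 1 / ((n : ℝ) + 1)} := by
      ext p
      simp [hφ, mul_sub, Finset.sum_sub_distrib]
    rw [hset, ENNReal.ofReal_mul (by positivity), one_div,
      ENNReal.ofReal_inv_of_pos (by positivity), ← div_eq_mul_inv, ENNReal.le_div_iff_mul_le
        (Or.inl (by simp; positivity)) (Or.inl (by simp)), mul_comm]
    rwa [one_div] at hn'
  have htend : Filter.Tendsto (fun n : ℕ =>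
      volume (Metric.cthickening ((1 / ((n : ℝ) + 1)) / 2) (lin a K))) Filter.atTop
      (nhds (volume (lin a K))) := by
    refine (tendsto_measure_cthickening_of_isCompact hcomp).comp ?_
    have := (tendsto_one_div_add_atTop_nhds_zero_nat (𝕜 := ℝ)).div_const 2
    simpa using this
  exact ge_of_tendsto_of_frequently htend hthick

lemma msupport_eq (μ : Measure ℝ) : msupport μ = μ.support := by
  ext x
  rw [Measure.mem_support_iff_forall]
  constructor
  · intro h U hU
    obtain ⟨V, hVU, hV, hxV⟩ := mem_nhds_iff.1 hU
    exact (h V hV hxV).trans_le (measure_mono hVU)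
  · intro h U hU hx
    exact h U (hU.mem_nhds hx)

/-- Bourgain's expansion theorem: for `0 < κ < 1` and `C > 0` there are `N ∈ ℕ` and `c > 0`,
depending only on `κ` and `C`, such that for any `(κ, C)`-Frostman probability measure `μ`
supported in `[−C, C]` with support `K`, the set `N K^{(N)} − N K^{(N)}` has Lebesgue measure
at least `c`. -/
theorem bourgain_expansion (κ C : ℝ) (hκ0 : 0 < κ) (hκ1 : κ < 1) (hC : 0 < C) :
    ∃ N : ℕ, 0 < N ∧ ∃ c : ℝ, 0 < c ∧
      ∀ μ : Measure ℝ, IsProbabilityMeasure μ →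
        msupport μ ⊆ Set.Icc (-C) C →
        (∀ x ∈ msupport μ, ∀ r : ℝ, 0 < r →
          μ (Metric.closedBall x r) ≤ ENNReal.ofReal (C * r ^ κ)) →
        ENNReal.ofReal c ≤
          volume (sumN N (prodN N (msupport μ)) - sumN N (prodN N (msupport μ))) := by
  obtain ⟨k, hk⟩ := exists_nat_ge (2 / κ)
  rw [div_le_iff₀ hκ0] at hk
  have hk' : 2 ≤ κ * (k + 1 : ℕ) := by push_cast; nlinarith
  set c₀ : ℝ := (2 * (1 + 4 * C ^ (k + 1)) + 1)⁻¹ with hc₀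
  have hc₀0 : 0 < c₀ := by positivity
  set M : ℝ := (k + 1) * C with hM
  obtain ⟨n, hn⟩ := exists_nat_gt (2 * (M + 1) / c₀)
  rw [div_lt_iff₀ hc₀0] at hn
  have hn0 : 0 < n := by
    rcases Nat.eq_zero_or_pos n with rfl | h
    · have : 0 < M := by positivity
      simp at hn; linarith
    · exact h
  set ρ₀ : ℝ := (1 / (2 * C)) ^ (1 / κ) with hρ₀
  have hρ₀0 : 0 < ρ₀ := by positivity
  have hρ₀C : C * ρ₀ ^ κ = 1 / 2 := by
    rw [hρ₀, ← Real.rpow_mul (by positivity), one_div_mul_cancel hκ0.ne', Real.rpow_one]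
    field_simp
  set ρ := ρ₀ / 2 with hρ
  have hρ0 : 0 < ρ := by positivity
  obtain ⟨m, d, hm, hred⟩ := reduce_all C ρ hC hρ0 k (2 * n) 0 (by omega)
  refine ⟨max m (d + 1), by omega, ρ ^ (max m (d + 1) - (d + 1)), by positivity, ?_⟩
  intro μ hμ hsupp hfrost
  set K := msupport μ with hK
  have hKs : K = μ.support := msupport_eq μ
  have hμK : μ Kᶜ = 0 := by rw [hKs]; exact Measure.measure_compl_support
  have hKc : IsCompact K :=
    isCompact_Icc.of_isClosed_subset (by rw [hKs]; exact Measure.isClosed_support) hsupp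
  have hKμ : μ K = 1 := (prob_compl_eq_zero_iff hKc.measurableSet).1 hμK
  obtain ⟨w, hw⟩ : K.Nonempty := nonempty_of_measure_ne_zero (μ := μ) (by rw [hKμ]; simp)
  obtain ⟨u, hu, v, hv, huv, huρ⟩ : ∃ u ∈ K, ∃ v ∈ K, ρ ≤ |u - v| ∧ ρ ≤ |u| := by
    obtain ⟨w', hw', hww⟩ : ∃ w' ∈ K, w' ∉ Metric.closedBall w ρ₀ := by
      by_contra! hcon
      have h1 := (measure_mono (μ := μ) hcon).trans (hfrost w hw ρ₀ hρ₀0)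
      rw [hKμ, hρ₀C] at h1
      have h2 : ENNReal.ofReal (1 / 2) < 1 := by
        rw [ENNReal.ofReal_lt_one]; norm_num
      exact absurd h1 (not_le.2 h2)
    rw [Metric.mem_closedBall, Real.dist_eq, not_le] at hww
    rcases le_total ρ |w| with h | h
    · exact ⟨w, hw, w', hw', by rw [abs_sub_comm]; linarith, h⟩
    · refine ⟨w', hw', w, hw, by linarith, ?_⟩
      have := abs_sub w' w
      linarith
  obtain ⟨a, ha, hac, hav⟩ := marstrand hC hk' μ K hKc hμK hfrost
  have hint : Set.Icc (-1) 1 ⊆ lin a (dset K (2 * n) 1) := by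
    refine interval_of_volume (M := M) hac ?_ hc₀0 hav (fun j => lin a (dset K j 1)) ?_ ?_ n hn
    · rintro t ⟨x, hx, rfl⟩
      rw [Set.mem_Icc, ← abs_le]
      calc |∑ i, a i * x i| ≤ ∑ i, |a i * x i| := Finset.abs_sum_le_sum_abs _ _
        _ ≤ ∑ _i : Fin (k + 1), C := by
            apply Finset.sum_le_sum
            intro i _
            rw [abs_mul]
            have h1 := ha i
            have h2 := abs_le.2 (hsupp (hx i))
            nlinarith [abs_nonneg (a i), abs_nonneg (x i)]
        _ = M := by simp [hM]
    · exact ⟨fun _ => 0, fun _ => dset_zero hw 0 1, by simp⟩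
    · rintro j x ⟨x, hx, rfl⟩ _ ⟨s, hs, rfl⟩ _ ⟨s', hs', rfl⟩
      refine ⟨fun i => x i + (s i - s' i), fun i => ?_, ?_⟩
      · apply dset_add (hx i)
        have h1 : ∀ y ∈ K, y ∈ sumN 1 (prodN 1 K) := fun y hy =>
          ⟨fun _ => y, fun _ => ⟨fun _ => y, fun _ => hy, by simp⟩, by simp⟩
        exact ⟨_, h1 _ (hs i), _, h1 _ (hs' i), rfl⟩
      · simp [mul_add, mul_sub, Finset.sum_add_distrib, Finset.sum_sub_distrib]
  obtain ⟨b, hb, hbI⟩ := hred K hsupp u hu v hv huv huρ a ha hint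
  exact volume_dset_final hu hρ0 huρ (le_max_left _ _) (le_max_right _ _)
    (volume_dset_of_interval hb hbI)
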